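/- Consider a mixed instance on a star graph (one center agent adjacent to all other agents, the satellites, with no edges between satellites) in which no edge is a chore for its satellite endpoint agent. Then the orientation that allocates every edge to its satellite endpoint is EFX^0_0 (and hence EFX^0_-). -/

import Mathlib

open Finset

variable {V : Type*} [DecidableEq V]

/-- `e` has strictly positive marginal value (is a *good*) for the valuation `v`
relative to the item set `M`. -/
def IsGoodFor (v : Finset (Sym2 V) → ℝ) (M : Finset (Sym2 V)) (e : Sym2 V) : Prop :=
  ∀ S ⊆ M.erase e, v S < v (insert e S)

/-- `e` has strictly negative marginal value (is a *chore*) for the valuation `v`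
relative to the item set `M`. -/
def IsChoreFor (v : Finset (Sym2 V) → ℝ) (M : Finset (Sym2 V)) (e : Sym2 V) : Prop :=
  ∀ S ⊆ M.erase e, v (insert e S) < v S

/-- `e` has zero marginal value (is a *dummy*) for the valuation `v`
relative to the item set `M`. -/
def IsDummyFor (v : Finset (Sym2 V) → ℝ) (M : Finset (Sym2 V)) (e : Sym2 V) : Prop :=
  ∀ S ⊆ M.erase e, v (insert e S) = v S

/-- A valid instance on a simple graph: the edge set `M` consists of non-loop edges,
every edge is (for every agent) a good, a chore, or a dummy, and every edge not
incident to an agent is a dummy for that agent. -/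
def ValidInstance (M : Finset (Sym2 V)) (v : V → Finset (Sym2 V) → ℝ) : Prop :=
  (∀ e ∈ M, ¬ e.IsDiag) ∧
  (∀ (i : V), ∀ e ∈ M, IsGoodFor (v i) M e ∨ IsChoreFor (v i) M e ∨ IsDummyFor (v i) M e) ∧
  (∀ (i : V), ∀ e ∈ M, i ∉ e → IsDummyFor (v i) M e)

/-- `X` is a (complete) allocation of the items in `M`: bundles are contained in `M`
and every item belongs to exactly one bundle. -/
def IsAllocation (M : Finset (Sym2 V)) (X : V → Finset (Sym2 V)) : Prop :=
  (∀ i, X i ⊆ M) ∧ ∀ e ∈ M, ∃! i, e ∈ X i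

/-- Every allocated edge goes to one of its endpoint agents. -/
def IsOrientation (X : V → Finset (Sym2 V)) : Prop :=
  ∀ i, ∀ e ∈ X i, i ∈ e

/-- Agent `i` envies agent `j`. -/
def Envies (v : V → Finset (Sym2 V) → ℝ) (X : V → Finset (Sym2 V)) (i j : V) : Prop :=
  v i (X i) < v i (X j)

/-- EFX condition on the envied bundle, removing an item whose removal *strictly*
decreases the value (superscript `+`). -/
def CondEnviedStrict (v : V → Finset (Sym2 V) → ℝ) (X : V → Finset (Sym2 V)) : Prop :=
  ∀ i j, Envies v X i j → ∀ e ∈ X j,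
    v i ((X j).erase e) < v i (X j) → v i ((X j).erase e) ≤ v i (X i)

/-- EFX condition on the envied bundle, removing an item whose removal weakly
decreases the value (superscript `0`). -/
def CondEnviedWeak (v : V → Finset (Sym2 V) → ℝ) (X : V → Finset (Sym2 V)) : Prop :=
  ∀ i j, Envies v X i j → ∀ e ∈ X j,
    v i ((X j).erase e) ≤ v i (X j) → v i ((X j).erase e) ≤ v i (X i)

/-- EFX condition on the envious agent's own bundle, removing an item whose removal
*strictly* increases the value (subscript `-`). -/
def CondOwnStrict (v : V → Finset (Sym2 V) → ℝ) (X : V → Finset (Sym2 V)) : Prop :=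
  ∀ i j, Envies v X i j → ∀ e ∈ X i,
    v i (X i) < v i ((X i).erase e) → v i (X j) ≤ v i ((X i).erase e)

/-- EFX condition on the envious agent's own bundle, removing an item whose removal
weakly increases the value (subscript `0`). -/
def CondOwnWeak (v : V → Finset (Sym2 V) → ℝ) (X : V → Finset (Sym2 V)) : Prop :=
  ∀ i j, Envies v X i j → ∀ e ∈ X i,
    v i (X i) ≤ v i ((X i).erase e) → v i (X j) ≤ v i ((X i).erase e)

theorem no_satellite_envy {V : Type*} [DecidableEq V]
    (c : V) (M : Finset (Sym2 V)) (v : V → Finset (Sym2 V) → ℝ)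
    (hvalid : ValidInstance M v)
    (hnochore : ∀ e ∈ M, ∀ i ∈ e, i ≠ c → ¬ IsChoreFor (v i) M e)
    (X : V → Finset (Sym2 V))
    (hmem : ∀ i e, e ∈ X i ↔ i ≠ c ∧ e ∈ M ∧ e = s(c, i))
    (i j : V) (hic : i ≠ c) : ¬ Envies v X i j := by
  obtain ⟨-, h2, h3⟩ := hvalid
  have hform : ∀ k, X k = ∅ ∨ (k ≠ c ∧ s(c, k) ∈ M ∧ X k = {s(c, k)}) := by
    intro k
    by_cases hk : k ≠ c ∧ s(c, k) ∈ M
    · right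
      refine ⟨hk.1, hk.2, ?_⟩
      ext e
      rw [hmem, Finset.mem_singleton]
      constructor
      · exact fun h => h.2.2
      · rintro rfl
        exact ⟨hk.1, hk.2, rfl⟩
    · left
      rw [Finset.eq_empty_iff_forall_notMem]
      intro e he
      rw [hmem] at he
      obtain ⟨a, b, rfl⟩ := he
      exact hk ⟨a, b⟩
  have hown : v i ∅ ≤ v i (X i) := by
    rcases hform i with h | ⟨_, hM, h⟩
    · rw [h]
    · rw [h]
      rcases h2 i _ hM with hg | hc | hd
      · simpa using (hg ∅ (by simp)).le
      · exact absurd hc (hnochore _ hM i (by simp) hic)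
      · simpa using (hd ∅ (by simp)).ge
  intro henv
  unfold Envies at henv
  by_cases hij : i = j
  · subst hij
    exact lt_irrefl _ henv
  rcases hform j with h | ⟨_, hM, h⟩
  · rw [h] at henv
    linarith
  · have := h3 i _ hM (by simp [hic, hij]) ∅ (by simp)
    rw [h] at henv
    simp at this
    linarith

/-- On a star with center `c` in which no edge is a chore for its
satellite endpoint, the orientation allocating every edge to its satellite endpoint is
EFX⁰₀ (and hence EFX⁰₋). -/
theorem stmt15 {V : Type*} [DecidableEq V]
    (c : V) (M : Finset (Sym2 V)) (v : V → Finset (Sym2 V) → ℝ)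
    (hvalid : ValidInstance M v)
    (hstar : ∀ e ∈ M, c ∈ e)
    (hnochore : ∀ e ∈ M, ∀ i ∈ e, i ≠ c → ¬ IsChoreFor (v i) M e)
    (X : V → Finset (Sym2 V))
    (hX : ∀ i, X i = if i = c then ∅ else M.filter (fun e => i ∈ e)) :
    IsAllocation M X ∧ IsOrientation X ∧
      (CondEnviedWeak v X ∧ CondOwnWeak v X) ∧
      (CondEnviedWeak v X ∧ CondOwnStrict v X) := by
  have hmem : ∀ i e, e ∈ X i ↔ i ≠ c ∧ e ∈ M ∧ e = s(c, i) := by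
    intro i e
    rw [hX]
    by_cases hi : i = c
    · simp [hi]
    · rw [if_neg hi, Finset.mem_filter]
      constructor
      · rintro ⟨hM, hie⟩
        exact ⟨hi, hM, (Sym2.mem_and_mem_iff (Ne.symm hi)).1 ⟨hstar e hM, hie⟩⟩
      · rintro ⟨_, hM, rfl⟩
        exact ⟨hM, by simp⟩
  have hno := no_satellite_envy c M v hvalid hnochore X hmem
  have hXc : X c = ∅ := by simp [hX]
  have hcenter : ∀ i j, Envies v X i j → i = c := by
    intro i j h
    by_contra hic
    exact hno i j hic h
  have hE : CondEnviedWeak v X := by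
    intro i j h e he _
    obtain rfl := hcenter i j h
    have : (X j).erase e = ∅ := by
      rw [Finset.eq_empty_iff_forall_notMem]
      intro f hf
      rw [Finset.mem_erase, hmem] at hf
      rw [hmem] at he
      exact hf.1 (hf.2.2.2.trans he.2.2.symm)
    rw [this, hXc]
  have hO : CondOwnWeak v X := by
    intro i j h e he _
    obtain rfl := hcenter i j h
    simp [hXc] at he
  refine ⟨⟨fun i e he => ((hmem i e).1 he).2.1, ?_⟩, ?_, ⟨hE, hO⟩, hE,
    fun i j h e he hlt => hO i j h e he hlt.le⟩
  · intro e he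
    obtain ⟨k, rfl⟩ := hstar e he
    have hk : k ≠ c := by
      rintro rfl
      exact hvalid.1 _ he (by simp)
    refine ⟨k, (hmem _ _).2 ⟨hk, he, rfl⟩, ?_⟩
    intro y hy
    have := ((hmem _ _).1 hy).2.2
    exact (Sym2.congr_right.1 this).symm
  · intro i e he
    rw [((hmem i e).1 he).2.2]
    simp
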